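/- Let $\Psi$ be symmetric positive definite $(m \times m)$, $W$ an $n \times m$ matrix, $\gamma > 0$, and $Z \in \mathbb{R}^n$. Suppose $u \sim N(0, \Psi^{-1})$ and $e \sim N(0, I_n)$ are independent, set $v = \frac{1}{\sqrt{\gamma}} W u + e$, let $w$ solve $(\frac{1}{\gamma} W \Psi^{-1} W^\top + I_n) w = \frac{1}{\sqrt{\gamma}} Z - v$, and define $\delta = u + \frac{1}{\sqrt{\gamma}} \Psi^{-1} W^\top w$. Then $\delta \sim N\big((W^\top W + \gamma \Psi)^{-1} W^\top Z,\ \gamma(W^\top W + \gamma\Psi)^{-1}\big)$. -/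

import Mathlib

open Matrix MeasureTheory

/-- Multivariate Gaussian measure on `Fin d → ℝ` with mean `μv` and covariance `S`,
defined through its Lebesgue density. -/
noncomputable def mvGaussian {d : ℕ} (μv : Fin d → ℝ) (S : Matrix (Fin d) (Fin d) ℝ) :
    Measure (Fin d → ℝ) :=
  volume.withDensity fun x =>
    ENNReal.ofReal ((2 * Real.pi) ^ (-(d:ℝ)/2) * S.det ^ (-(1:ℝ)/2) *
      Real.exp (-(1/2) * ((x - μv) ⬝ᵥ (S⁻¹ *ᵥ (x - μv)))))

/-!
Conditional simulation (Matheron's rule): `δ = u + K (y - (Φ u + e))` with `Φ = W / √γ`,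
`y = Z / √γ` and `K` the Kalman gain of the observation `Φ u + e`. As an affine image of the
independent Gaussians `u` and `e`, `δ` is Gaussian with covariance
`(1 - K Φ) D (1 - K Φ)ᵀ + K Kᵀ`, where `D = Ψ⁻¹`. The normal equation `K (Φ D Φᵀ + 1) = D Φᵀ`
collapses this to `D - K Φ D`, which is `(Ψ + Φᵀ Φ)⁻¹` by the Woodbury identity; the same equation
gives `K = (Ψ + Φᵀ Φ)⁻¹ Φᵀ`, hence the mean.
-/

open ProbabilityTheory WithLp
open scoped MatrixOrder NNReal RealInnerProductSpace

lemma prod_gaussianPDFReal_zero_one {ι : Type*} [Fintype ι] (x : ι → ℝ) :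
    ∏ i, gaussianPDFReal 0 1 (x i) =
      (2 * Real.pi) ^ (-(Fintype.card ι : ℝ) / 2) * Real.exp (-(1 / 2) * (x ⬝ᵥ x)) := by
  have hpow : (√(2 * Real.pi))⁻¹ ^ Fintype.card ι =
      (2 * Real.pi) ^ (-(Fintype.card ι : ℝ) / 2) := by
    rw [Real.sqrt_eq_rpow, ← Real.rpow_neg (by positivity), ← Real.rpow_natCast,
      ← Real.rpow_mul (by positivity)]
    congr 1
    ring
  have hexp : ∑ i, -(x i - 0) ^ 2 / (2 * 1) = -(1 / 2) * (x ⬝ᵥ x) := by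
    rw [dotProduct, Finset.mul_sum]
    exact Finset.sum_congr rfl fun i _ => by ring
  simp only [gaussianPDFReal_def, NNReal.coe_one, mul_one (2 * Real.pi), Finset.prod_mul_distrib,
    ← Real.exp_sum, Finset.prod_const, Finset.card_univ, hpow, hexp]

lemma pi_gaussianReal_eq_withDensity {ι : Type*} [Fintype ι] (μ : ι → ℝ) {v : ι → ℝ≥0}
    (hv : ∀ i, v i ≠ 0) :
    Measure.pi (fun i => gaussianReal (μ i) (v i)) =
      volume.withDensity fun x => ENNReal.ofReal (∏ i, gaussianPDFReal (μ i) (v i) (x i)) := by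
  refine Measure.pi_eq fun s hs => ?_
  rw [withDensity_apply _ (.univ_pi hs), volume_pi, Measure.restrict_pi_pi,
    ← ofReal_integral_eq_lintegral_ofReal
      (Integrable.fintype_prod fun i => (integrable_gaussianPDFReal _ _).restrict)
      (ae_of_all _ fun x => Finset.prod_nonneg fun i _ => gaussianPDFReal_nonneg _ _ _),
    integral_fintype_prod_eq_prod, ENNReal.ofReal_prod_of_nonneg fun i _ =>
      integral_nonneg fun x => gaussianPDFReal_nonneg _ _ _]
  exact Finset.prod_congr rfl fun i _ => (gaussianReal_apply_eq_integral _ (hv i) (s i)).symm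

lemma map_withDensity_comp {α β : Type*} [MeasurableSpace α] [MeasurableSpace β]
    {μ : Measure α} {f : α → β} {g : β → ENNReal} (hf : Measurable f) (hg : Measurable g) :
    (μ.withDensity (g ∘ f)).map f = (μ.map f).withDensity g := by
  ext s hs
  rw [Measure.map_apply hf hs, withDensity_apply _ (hf hs), withDensity_apply _ hs,
    setLIntegral_map hs hg hf]
  rfl

lemma map_add_mulVec_volume {ι : Type*} [Fintype ι] [DecidableEq ι] (b : ι → ℝ)
    {A : Matrix ι ι ℝ} (hA : A.det ≠ 0) :
    (volume : Measure (ι → ℝ)).map (fun x => b + A *ᵥ x) =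
      ENNReal.ofReal |A.det⁻¹| • volume := by
  change volume.map ((b + ·) ∘ toLin' A) = _
  rw [← Measure.map_map (by fun_prop) (LinearMap.continuous_on_pi _).measurable,
    Real.map_matrix_volume_pi_eq_smul_volume_pi hA, Measure.map_smul, map_add_left_eq_self]

lemma mulVec_dotProduct_inv_mul_transpose_mulVec {ι R : Type*} [Fintype ι] [DecidableEq ι]
    [CommRing R] {A : Matrix ι ι R} (hA : IsUnit A) (x : ι → R) :
    (A *ᵥ x) ⬝ᵥ ((A * Aᵀ)⁻¹ *ᵥ (A *ᵥ x)) = x ⬝ᵥ x := by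
  have hdet := (isUnit_iff_isUnit_det A).1 hA
  rw [Matrix.mul_inv_rev, mulVec_mulVec, Matrix.mul_assoc, nonsing_inv_mul _ hdet,
    Matrix.mul_one, ← transpose_nonsing_inv, dotProduct_mulVec, vecMul_transpose,
    mulVec_mulVec, nonsing_inv_mul _ hdet, one_mulVec]

/-- The Lebesgue density of `N(μ, S)`, for an invertible covariance matrix `S`. -/
noncomputable def mvGaussianPDFReal {d : ℕ} (μ : Fin d → ℝ) (S : Matrix (Fin d) (Fin d) ℝ)
    (x : Fin d → ℝ) : ℝ :=
  (2 * Real.pi) ^ (-(d : ℝ) / 2) * S.det ^ (-(1 : ℝ) / 2) *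
    Real.exp (-(1 / 2) * ((x - μ) ⬝ᵥ (S⁻¹ *ᵥ (x - μ))))

lemma mvGaussian_eq_withDensity {d : ℕ} (μ : Fin d → ℝ) (S : Matrix (Fin d) (Fin d) ℝ) :
    mvGaussian μ S = volume.withDensity fun x => ENNReal.ofReal (mvGaussianPDFReal μ S x) :=
  rfl

lemma measurable_mvGaussianPDFReal {d : ℕ} (μ : Fin d → ℝ) (S : Matrix (Fin d) (Fin d) ℝ) :
    Measurable (mvGaussianPDFReal μ S) := by
  unfold mvGaussianPDFReal
  fun_prop

lemma mvGaussianPDFReal_zero_one {d : ℕ} (x : Fin d → ℝ) :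
    mvGaussianPDFReal 0 1 x = (2 * Real.pi) ^ (-(d : ℝ) / 2) * Real.exp (-(1 / 2) * (x ⬝ᵥ x)) := by
  simp [mvGaussianPDFReal]

lemma mvGaussian_zero_one (d : ℕ) :
    mvGaussian (0 : Fin d → ℝ) 1 = Measure.pi fun _ => gaussianReal 0 1 := by
  simp_rw [pi_gaussianReal_eq_withDensity _ fun _ => one_ne_zero, mvGaussian_eq_withDensity,
    mvGaussianPDFReal_zero_one, prod_gaussianPDFReal_zero_one, Fintype.card_fin]

lemma abs_det_mul_mvGaussianPDFReal_add_mulVec {d : ℕ} (μ : Fin d → ℝ)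
    {A : Matrix (Fin d) (Fin d) ℝ} (hA : A.det ≠ 0) (x : Fin d → ℝ) :
    |A.det| * mvGaussianPDFReal μ (A * Aᵀ) (μ + A *ᵥ x) = mvGaussianPDFReal 0 1 x := by
  have hdet : (A * Aᵀ).det ^ (-(1 : ℝ) / 2) = |A.det|⁻¹ := by
    rw [det_mul, det_transpose, ← abs_mul_abs_self, ← pow_two, ← Real.rpow_natCast,
      ← Real.rpow_mul (abs_nonneg _), ← Real.rpow_neg_one]
    norm_num
  have hAu : IsUnit A := (isUnit_iff_isUnit_det A).2 hA.isUnit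
  rw [mvGaussianPDFReal_zero_one, mvGaussianPDFReal, hdet, add_sub_cancel_left,
    mulVec_dotProduct_inv_mul_transpose_mulVec hAu]
  field_simp

lemma map_mvGaussian_zero_one {d : ℕ} (μ : Fin d → ℝ) {A : Matrix (Fin d) (Fin d) ℝ}
    (hA : A.det ≠ 0) :
    (mvGaussian 0 1).map (fun x => μ + A *ᵥ x) = mvGaussian μ (A * Aᵀ) := by
  have hpdf := (measurable_mvGaussianPDFReal μ (A * Aᵀ)).ennreal_ofReal
  have hdensity : (fun x => ENNReal.ofReal (mvGaussianPDFReal 0 1 x)) =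
      (ENNReal.ofReal |A.det| • fun y => ENNReal.ofReal (mvGaussianPDFReal μ (A * Aᵀ) y)) ∘
        fun x => μ + A *ᵥ x := by
    ext x
    simp [← abs_det_mul_mvGaussianPDFReal_add_mulVec μ hA, ENNReal.ofReal_mul]
  have hscale : ENNReal.ofReal |A.det⁻¹| * ENNReal.ofReal |A.det| = 1 := by
    rw [← ENNReal.ofReal_mul (abs_nonneg _), ← abs_mul, inv_mul_cancel₀ hA, abs_one,
      ENNReal.ofReal_one]
  rw [mvGaussian_eq_withDensity, hdensity,
    map_withDensity_comp (by fun_prop) (hpdf.const_smul _), map_add_mulVec_volume μ hA,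
    withDensity_smul_measure, withDensity_smul _ hpdf, smul_smul, hscale, one_smul,
    mvGaussian_eq_withDensity]

lemma mvGaussian_eq_map_multivariateGaussian {d : ℕ} (μ : Fin d → ℝ)
    {S : Matrix (Fin d) (Fin d) ℝ} (hS : S.PosDef) :
    mvGaussian μ S = (multivariateGaussian (toLp 2 μ) S).map ofLp := by
  have hsqrt : CFC.sqrt S * (CFC.sqrt S)ᵀ = S := by
    rw [← conjTranspose_eq_transpose_of_trivial, ← star_eq_conjTranspose,
      (CFC.sqrt_nonneg S).isSelfAdjoint.star_eq, CFC.sqrt_mul_sqrt_self S hS.posSemidef.nonneg]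
  have hdet : (CFC.sqrt S).det ≠ 0 := by
    refine fun h => hS.det_pos.ne' ?_
    rw [← hsqrt, det_mul, h, zero_mul]
  conv_lhs => rw [← hsqrt]
  rw [← map_mvGaussian_zero_one μ hdet, mvGaussian_zero_one, multivariateGaussian,
    ← map_pi_eq_stdGaussian, Measure.map_map (by fun_prop) (by fun_prop),
    Measure.map_map (by fun_prop) (by fun_prop)]
  rfl

section MultivariateGaussian

variable {ι κ o : Type*} [Fintype ι] [DecidableEq ι] [Fintype κ] [DecidableEq κ]

lemma charFun_map_continuousLinearMap {E F : Type*} [NormedAddCommGroup E] [InnerProductSpace ℝ E]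
    [CompleteSpace E] [MeasurableSpace E] [BorelSpace E] [NormedAddCommGroup F]
    [InnerProductSpace ℝ F] [CompleteSpace F] [MeasurableSpace F] [BorelSpace F]
    (μ : Measure E) (L : E →L[ℝ] F) (t : F) :
    charFun (μ.map L) t = charFun μ (L.adjoint t) := by
  rw [charFun_apply, charFun_apply,
    integral_map (by fun_prop) (Continuous.aestronglyMeasurable (by fun_prop))]
  simp_rw [ContinuousLinearMap.adjoint_inner_right]

lemma charFun_map_toEuclideanLin (μ : Measure (EuclideanSpace ℝ ι)) (B : Matrix κ ι ℝ)
    (t : EuclideanSpace ℝ κ) :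
    charFun (μ.map B.toEuclideanLin) t = charFun μ (Bᵀ.toEuclideanLin t) := by
  rw [← conjTranspose_eq_transpose_of_trivial, toEuclideanLin_conjTranspose_eq_adjoint]
  exact charFun_map_continuousLinearMap μ (B.toEuclideanLin.toContinuousLinearMap) t

lemma multivariateGaussian_map_toEuclideanLin (μ : EuclideanSpace ℝ ι) {S : Matrix ι ι ℝ}
    (hS : S.PosSemidef) (B : Matrix κ ι ℝ) :
    (multivariateGaussian μ S).map B.toEuclideanLin =
      multivariateGaussian (B.toEuclideanLin μ) (B * S * Bᵀ) := by
  have hBSB : (B * S * Bᵀ).PosSemidef := by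
    simpa using hS.mul_mul_conjTranspose_same B
  have : IsProbabilityMeasure ((multivariateGaussian μ S).map B.toEuclideanLin) :=
    Measure.isProbabilityMeasure_map (Measurable.aemeasurable (by fun_prop))
  refine Measure.ext_of_charFun (funext fun t => ?_)
  have hmean : ⟪Bᵀ.toEuclideanLin t, μ⟫ = ⟪t, B.toEuclideanLin μ⟫ := by
    rw [← conjTranspose_eq_transpose_of_trivial, toEuclideanLin_conjTranspose_eq_adjoint,
      LinearMap.adjoint_inner_left]
  have hcov : (Bᵀ *ᵥ ofLp t) ⬝ᵥ S *ᵥ (Bᵀ *ᵥ ofLp t) = ofLp t ⬝ᵥ (B * S * Bᵀ) *ᵥ ofLp t := by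
    rw [← mulVec_mulVec, ← mulVec_mulVec, dotProduct_mulVec _ B, ← mulVec_transpose]
  rw [charFun_map_toEuclideanLin, charFun_multivariateGaussian hS,
    charFun_multivariateGaussian hBSB, hmean, ofLp_toLpLin, toLin'_apply, hcov]

lemma multivariateGaussian_map_const_add (μ b : EuclideanSpace ℝ ι) (S : Matrix ι ι ℝ) :
    (multivariateGaussian μ S).map (b + ·) = multivariateGaussian (b + μ) S := by
  rw [multivariateGaussian, Measure.map_map (by fun_prop) (by fun_prop), multivariateGaussian]
  simp only [Function.comp_def, add_assoc]

lemma multivariateGaussian_conv (μ ν : EuclideanSpace ℝ ι) {S T : Matrix ι ι ℝ}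
    (hS : S.PosSemidef) (hT : T.PosSemidef) :
    multivariateGaussian μ S ∗ multivariateGaussian ν T = multivariateGaussian (μ + ν) (S + T) := by
  refine Measure.ext_of_charFun (funext fun t => ?_)
  rw [charFun_conv, charFun_multivariateGaussian hS, charFun_multivariateGaussian hT,
    charFun_multivariateGaussian (hS.add hT), ← Complex.exp_add, inner_add_right, add_mulVec,
    dotProduct_add]
  push_cast
  ring_nf

lemma multivariateGaussian_prod_map_add [Fintype o] [DecidableEq o] (b : EuclideanSpace ℝ κ)
    (μ : EuclideanSpace ℝ ι) (ν : EuclideanSpace ℝ o) {S : Matrix ι ι ℝ} {T : Matrix o o ℝ}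
    (hS : S.PosSemidef) (hT : T.PosSemidef) (B : Matrix κ ι ℝ) (C : Matrix κ o ℝ) :
    ((multivariateGaussian μ S).prod (multivariateGaussian ν T)).map
        (fun x => b + (B.toEuclideanLin x.1 + C.toEuclideanLin x.2)) =
      multivariateGaussian (b + (B.toEuclideanLin μ + C.toEuclideanLin ν))
        (B * S * Bᵀ + C * T * Cᵀ) := by
  have hBSB : (B * S * Bᵀ).PosSemidef := by simpa using hS.mul_mul_conjTranspose_same B
  have hCTC : (C * T * Cᵀ).PosSemidef := by simpa using hT.mul_mul_conjTranspose_same C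
  rw [← multivariateGaussian_map_const_add, ← multivariateGaussian_conv _ _ hBSB hCTC,
    ← multivariateGaussian_map_toEuclideanLin μ hS, ← multivariateGaussian_map_toEuclideanLin ν hT,
    Measure.conv, Measure.map_prod_map _ _ (by fun_prop) (by fun_prop),
    Measure.map_map (by fun_prop) (by fun_prop), Measure.map_map (by fun_prop) (by fun_prop)]
  rfl

end MultivariateGaussian

section KalmanGain

variable {ι κ R : Type*} [Fintype ι] [Fintype κ] [DecidableEq κ] [CommRing R]

/-- The Kalman gain `K = D Φᵀ (Φ D Φᵀ + N)⁻¹` of the observation `y = Φ u + e`, where `u` has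
covariance `D` and the independent noise `e` has covariance `N`. The innovation covariance
`Φ D Φᵀ + N` has to be invertible for this to be meaningful. -/
noncomputable def kalmanGain (D : Matrix ι ι R) (Φ : Matrix κ ι R) (N : Matrix κ κ R) :
    Matrix ι κ R :=
  D * Φᵀ * (Φ * D * Φᵀ + N)⁻¹

variable {D : Matrix ι ι R} {Φ : Matrix κ ι R} {N : Matrix κ κ R}

lemma kalmanGain_mul_innovation (h : IsUnit (Φ * D * Φᵀ + N)) :
    kalmanGain D Φ N * (Φ * D * Φᵀ + N) = D * Φᵀ :=
  nonsing_inv_mul_cancel_right _ _ ((isUnit_iff_isUnit_det _).1 h)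

lemma sub_kalmanGain_mul_transpose (h : IsUnit (Φ * D * Φᵀ + N)) :
    (D - kalmanGain D Φ N * Φ * D) * Φᵀ = kalmanGain D Φ N * N := by
  rw [Matrix.sub_mul, sub_eq_iff_eq_add, ← kalmanGain_mul_innovation h, Matrix.mul_add, add_comm]
  simp only [Matrix.mul_assoc]

variable [DecidableEq ι]

lemma kalmanGain_joseph_form (h : IsUnit (Φ * D * Φᵀ + N)) :
    (1 - kalmanGain D Φ N * Φ) * D * (1 - kalmanGain D Φ N * Φ)ᵀ +
        kalmanGain D Φ N * N * (kalmanGain D Φ N)ᵀ =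
      D - kalmanGain D Φ N * Φ * D := by
  rw [Matrix.sub_mul, Matrix.one_mul, ← sub_kalmanGain_mul_transpose h, transpose_sub,
    transpose_mul, transpose_one, Matrix.mul_assoc _ Φᵀ, ← Matrix.mul_add, sub_add_cancel,
    Matrix.mul_one]

lemma sub_kalmanGain_mul_eq_inv (hD : IsUnit D) (hN : IsUnit N) (h : IsUnit (Φ * D * Φᵀ + N)) :
    D - kalmanGain D Φ N * Φ * D = (D⁻¹ + Φᵀ * N⁻¹ * Φ)⁻¹ := by
  have hD' := (isUnit_iff_isUnit_det _).1 hD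
  have hN' := (isUnit_iff_isUnit_det _).1 hN
  rw [add_mul_mul_inv_eq_sub _ _ _ _ (isUnit_nonsing_inv_iff.2 hD) (isUnit_nonsing_inv_iff.2 hN),
    nonsing_inv_nonsing_inv _ hD', nonsing_inv_nonsing_inv _ hN', kalmanGain, add_comm N]
  rwa [nonsing_inv_nonsing_inv _ hD', nonsing_inv_nonsing_inv _ hN', add_comm]

lemma kalmanGain_eq_inv_mul (hD : IsUnit D) (hN : IsUnit N) (h : IsUnit (Φ * D * Φᵀ + N)) :
    kalmanGain D Φ N = (D⁻¹ + Φᵀ * N⁻¹ * Φ)⁻¹ * Φᵀ * N⁻¹ := by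
  rw [← sub_kalmanGain_mul_eq_inv hD hN h, sub_kalmanGain_mul_transpose h,
    mul_nonsing_inv_cancel_right _ _ ((isUnit_iff_isUnit_det _).1 hN)]

end KalmanGain

lemma multivariateGaussian_prod_map_matheron {ι κ : Type*} [Fintype ι] [DecidableEq ι]
    [Fintype κ] [DecidableEq κ] (μ : EuclideanSpace ℝ ι) (y : EuclideanSpace ℝ κ)
    {D : Matrix ι ι ℝ} (hD : D.PosSemidef) {N : Matrix κ κ ℝ} (hN : N.PosSemidef)
    {Φ : Matrix κ ι ℝ} (h : IsUnit (Φ * D * Φᵀ + N)) :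
    ((multivariateGaussian μ D).prod (multivariateGaussian 0 N)).map
        (fun x => x.1 + (kalmanGain D Φ N).toEuclideanLin (y - (Φ.toEuclideanLin x.1 + x.2))) =
      multivariateGaussian (μ + (kalmanGain D Φ N).toEuclideanLin (y - Φ.toEuclideanLin μ))
        (D - kalmanGain D Φ N * Φ * D) := by
  set K := kalmanGain D Φ N with hK
  have haffine (u : EuclideanSpace ℝ ι) (e : EuclideanSpace ℝ κ) :
      u + K.toEuclideanLin (y - (Φ.toEuclideanLin u + e)) =
        K.toEuclideanLin y + ((1 - K * Φ).toEuclideanLin u + (-K).toEuclideanLin e) := by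
    simp only [map_sub, map_add, map_neg, toLpLin_one, toLpLin_mul_same, LinearMap.sub_apply,
      LinearMap.neg_apply, LinearMap.id_apply, LinearMap.comp_apply]
    abel
  have hmean := haffine μ 0
  rw [add_zero] at hmean
  simp_rw [haffine, hmean, multivariateGaussian_prod_map_add _ _ _ hD hN]
  rw [transpose_neg, Matrix.neg_mul, Matrix.neg_mul, Matrix.mul_neg, neg_neg, hK,
    kalmanGain_joseph_form h]

lemma isUnit_mul_mul_transpose_add {ι κ : Type*} [Fintype ι] [Fintype κ] [DecidableEq κ]
    {D : Matrix ι ι ℝ} (hD : D.PosSemidef) {N : Matrix κ κ ℝ} (hN : N.PosDef)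
    (Φ : Matrix κ ι ℝ) : IsUnit (Φ * D * Φᵀ + N) := by
  have hΦ : (Φ * D * Φᵀ).PosSemidef := by simpa using hD.mul_mul_conjTranspose_same Φ
  exact (PosDef.posSemidef_add hΦ hN).isUnit

lemma posDef_inv_add_transpose_mul_inv_mul {ι κ : Type*} [Fintype ι] [DecidableEq ι] [Fintype κ]
    [DecidableEq κ] {D : Matrix ι ι ℝ} (hD : D.PosDef) {N : Matrix κ κ ℝ} (hN : N.PosDef)
    (Φ : Matrix κ ι ℝ) : (D⁻¹ + Φᵀ * N⁻¹ * Φ).PosDef := by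
  have hΦ : (Φᵀ * N⁻¹ * Φ).PosSemidef := by
    simpa using hN.inv.posSemidef.conjTranspose_mul_mul_same Φ
  exact hD.inv.add_posSemidef hΦ

lemma mvGaussian_prod_map_matheron {m n : ℕ} (μ : Fin m → ℝ) (y : Fin n → ℝ)
    {D : Matrix (Fin m) (Fin m) ℝ} (hD : D.PosDef) {N : Matrix (Fin n) (Fin n) ℝ} (hN : N.PosDef)
    (Φ : Matrix (Fin n) (Fin m) ℝ) :
    ((mvGaussian μ D).prod (mvGaussian 0 N)).map
        (fun x => x.1 + kalmanGain D Φ N *ᵥ (y - (Φ *ᵥ x.1 + x.2))) =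
      mvGaussian (μ + kalmanGain D Φ N *ᵥ (y - Φ *ᵥ μ)) (D⁻¹ + Φᵀ * N⁻¹ * Φ)⁻¹ := by
  have h := isUnit_mul_mul_transpose_add hD.posSemidef hN Φ
  have hmatheron := multivariateGaussian_prod_map_matheron (toLp 2 μ) (toLp 2 y)
    hD.posSemidef hN.posSemidef h
  rw [sub_kalmanGain_mul_eq_inv hD.isUnit hN.isUnit h] at hmatheron
  rw [mvGaussian_eq_map_multivariateGaussian _ hD, mvGaussian_eq_map_multivariateGaussian _ hN,
    mvGaussian_eq_map_multivariateGaussian _ (posDef_inv_add_transpose_mul_inv_mul hD hN Φ).inv,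
    Measure.map_prod_map _ _ (by fun_prop) (by fun_prop),
    Measure.map_map (by fun_prop) (by fun_prop)]
  refine .trans ?_ (congrArg (Measure.map ofLp) hmatheron)
  rw [Measure.map_map (by fun_prop) (by fun_prop)]
  rfl

lemma inv_add_transpose_smul_mul_smul {ι κ : Type*} [Fintype ι] [DecidableEq ι] [Fintype κ]
    {Ψ : Matrix ι ι ℝ} (hΨ : Ψ.PosDef) (W : Matrix κ ι ℝ) {γ s : ℝ} (hγ : 0 < γ)
    (hs : s * s = γ⁻¹) : (Ψ + (s • W)ᵀ * (s • W))⁻¹ = γ • (Wᵀ * W + γ • Ψ)⁻¹ := by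
  have hW : (Wᵀ * W).PosSemidef := by simpa using posSemidef_conjTranspose_mul_self W
  have hunit := (isUnit_iff_isUnit_det _).1 (PosDef.posSemidef_add hW (hΨ.smul hγ)).isUnit
  have hscale : Ψ + (s • W)ᵀ * (s • W) = γ⁻¹ • (Wᵀ * W + γ • Ψ) := by
    simp [smul_smul, hs, hγ.ne', add_comm]
  rw [hscale]
  refine inv_eq_right_inv ?_
  rw [Matrix.smul_mul, Matrix.mul_smul, smul_smul, mul_nonsing_inv _ hunit,
    inv_mul_cancel₀ hγ.ne', one_smul]

theorem bhattacharya_sampler_correct (n m : ℕ)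
    (Ψ : Matrix (Fin m) (Fin m) ℝ) (hΨ : Ψ.PosDef)
    (W : Matrix (Fin n) (Fin m) ℝ) (γ : ℝ) (hγ : 0 < γ) (Z : Fin n → ℝ) :
    Measure.map
      (fun ue : (Fin m → ℝ) × (Fin n → ℝ) =>
        ue.1 + (Real.sqrt γ)⁻¹ •
          (Ψ⁻¹ *ᵥ (Wᵀ *ᵥ
            ((γ⁻¹ • (W * Ψ⁻¹ * Wᵀ) + 1)⁻¹ *ᵥ
              ((Real.sqrt γ)⁻¹ • Z - ((Real.sqrt γ)⁻¹ • (W *ᵥ ue.1) + ue.2))))))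
      ((mvGaussian 0 Ψ⁻¹).prod (mvGaussian 0 1))
    = mvGaussian ((Wᵀ * W + γ • Ψ)⁻¹ *ᵥ (Wᵀ *ᵥ Z)) (γ • (Wᵀ * W + γ • Ψ)⁻¹) := by
  have hs : (√γ)⁻¹ * (√γ)⁻¹ = γ⁻¹ := by rw [← mul_inv, Real.mul_self_sqrt hγ.le]
  set s := (√γ)⁻¹
  have hcov : ((Ψ⁻¹)⁻¹ + (s • W)ᵀ * (1 : Matrix (Fin n) (Fin n) ℝ)⁻¹ * (s • W))⁻¹ =
      γ • (Wᵀ * W + γ • Ψ)⁻¹ := by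
    rw [nonsing_inv_nonsing_inv _ ((isUnit_iff_isUnit_det _).1 hΨ.isUnit), inv_one,
      Matrix.mul_one, inv_add_transpose_smul_mul_smul hΨ W hγ hs]
  have hgain : kalmanGain Ψ⁻¹ (s • W) 1 =
      s • (Ψ⁻¹ * Wᵀ * (γ⁻¹ • (W * Ψ⁻¹ * Wᵀ) + 1)⁻¹) := by
    simp [kalmanGain, smul_smul, hs]
  have hmean : kalmanGain Ψ⁻¹ (s • W) 1 *ᵥ (s • Z) = (Wᵀ * W + γ • Ψ)⁻¹ *ᵥ (Wᵀ *ᵥ Z) := by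
    rw [kalmanGain_eq_inv_mul hΨ.inv.isUnit isUnit_one
      (isUnit_mul_mul_transpose_add hΨ.inv.posSemidef .one _), hcov]
    simp [mulVec_smul, smul_mulVec, smul_smul, ← mul_assoc, hs, hγ.ne']
  have hmatheron := mvGaussian_prod_map_matheron 0 (s • Z) hΨ.inv PosDef.one (s • W)
  rw [mulVec_zero, sub_zero, zero_add, hmean, hcov, hgain] at hmatheron
  simpa [smul_mulVec, mulVec_mulVec, Matrix.mul_assoc] using hmatheron
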